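/- arXiv:2110.07551 — 3 statements merged into one kernel-verified Lean document; each statement's English description precedes it below -/
import Mathlib

section
/- Let E be a real inner product space of finite dimension n ≥ 3, let Q be a symmetric bilinear form on E, let R denote the trace of Q with respect to the inner product, and let K ∈ ℝ. If R < n(n−1)K, then there exists a unit vector v ∈ E such that Q(v,v) < (n−1)K and R − 2Q(v,v) < (n−1)(n−2)K. -/
open scoped BigOperators

/-- Over a space of dimension at least two, the quadratic form of a bilinear form attains
its average over an orthonormal basis at some unit vector. -/
theorem exists_unit_vector_eq_average
    {E ι : Type*} [NormedAddCommGroup E] [InnerProductSpace ℝ E] [FiniteDimensional ℝ E]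
    [Fintype ι] (hdim : 1 < Module.finrank ℝ E) (Q : E →ₗ[ℝ] E →ₗ[ℝ] ℝ)
    (b : OrthonormalBasis ι ℝ E) :
    ∃ v : E, ‖v‖ = 1 ∧ Q v v = (∑ i, Q (b i) (b i)) / Fintype.card ι := by
  have hcard : 0 < Fintype.card ι := by
    rw [← Module.finrank_eq_card_basis b.toBasis]; omega
  have hne : (Finset.univ : Finset ι).Nonempty :=
    Finset.univ_nonempty_iff.mpr (Fintype.card_pos_iff.mp hcard)
  have hcard' : (Fintype.card ι : ℝ) ≠ 0 := by positivity
  set m : ℝ := (∑ i, Q (b i) (b i)) / Fintype.card ι with hm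
  have hsum : ∑ _i : ι, m = ∑ i, Q (b i) (b i) := by
    rw [Finset.sum_const, Finset.card_univ, nsmul_eq_mul, hm]
    field_simp
  obtain ⟨i, -, hi⟩ := Finset.exists_le_of_sum_le hne hsum.ge
  obtain ⟨j, -, hj⟩ := Finset.exists_le_of_sum_le hne hsum.le
  have hcont : Continuous fun v : E => Q v v := by
    have h : Continuous fun v : E => LinearMap.toContinuousLinearMap
        (LinearMap.toContinuousLinearMap.toLinearMap ∘ₗ Q) v v := by fun_prop
    exact h
  have hconn : IsPreconnected (Metric.sphere (0 : E) 1) :=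
    isPreconnected_sphere (Module.lt_rank_of_lt_finrank (by exact_mod_cast hdim)) 0 1
  obtain ⟨v, hv, hQv⟩ := hconn.intermediate_value
    (by simp : b i ∈ Metric.sphere (0 : E) 1) (by simp : b j ∈ Metric.sphere (0 : E) 1)
    hcont.continuousOn ⟨hi, hj⟩
  exact ⟨v, by simpa using hv, hQv⟩

/-- Let `E` be a real inner product space of finite dimension `n ≥ 3`, let `Q` be a
symmetric bilinear form on `E`, and let `R` be the trace of `Q` with respect to the
inner product (computed in an orthonormal basis `b`).  If `R < n(n-1)K`, then there is a
unit vector `v` with `Q(v,v) < (n-1)K` and `R - 2 Q(v,v) < (n-1)(n-2)K`. -/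
theorem exists_unit_vector_of_trace_lt
    {E : Type*} [NormedAddCommGroup E] [InnerProductSpace ℝ E] [FiniteDimensional ℝ E]
    {n : ℕ} (hn : 3 ≤ n) (hdim : Module.finrank ℝ E = n)
    (Q : E →ₗ[ℝ] E →ₗ[ℝ] ℝ) (hQsymm : ∀ x y, Q x y = Q y x)
    (b : OrthonormalBasis (Fin n) ℝ E)
    (R K : ℝ) (hR : R = ∑ i : Fin n, Q (b i) (b i))
    (hRK : R < (n : ℝ) * ((n : ℝ) - 1) * K) :
    ∃ v : E, ‖v‖ = 1 ∧ Q v v < ((n : ℝ) - 1) * K ∧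
      R - 2 * Q v v < ((n : ℝ) - 1) * ((n : ℝ) - 2) * K := by
  obtain ⟨v, hv, hQv⟩ := exists_unit_vector_eq_average (by omega) Q b
  rw [← hR, Fintype.card_fin] at hQv
  have hn' : (3 : ℝ) ≤ n := by exact_mod_cast hn
  have hRv : R = n * Q v v := by
    rw [hQv]
    field_simp
  have hlt : Q v v < ((n : ℝ) - 1) * K := by
    rw [hRv, mul_assoc] at hRK
    exact lt_of_mul_lt_mul_left hRK (by positivity)
  refine ⟨v, hv, hlt, ?_⟩
  rw [hRv]
  nlinarith [mul_pos (by linarith : (0 : ℝ) < n - 2) (sub_pos.mpr hlt)]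
end

section
/- Let E be a real inner product space of finite dimension n ≥ 2, and let R : E × E × E × E → ℝ be a multilinear map satisfying the curvature symmetries R(x,y,z,w) = −R(y,x,z,w) and R(x,y,z,w) = R(z,w,x,y). Suppose R has nonnegative sectional curvature, i.e. R(x,y,x,y) ≥ 0 for all x, y ∈ E. Define, for an orthonormal basis (e₁, …, e_n), Ric(x,z) = Σ_k R(x, e_k, z, e_k), Scal = Σ_i Ric(e_i, e_i), and |Ric|² = Σ_{i,j} Ric(e_i, e_j)². Then Scal² − 2|Ric|² ≥ 0. -/
open scoped BigOperators

/-- Every bilinear form on a finite-dimensional inner product space is represented by an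
endomorphism. -/
lemma LinearMap.exists_inner_apply_eq_bilin
    {E : Type*} [NormedAddCommGroup E] [InnerProductSpace ℝ E] [FiniteDimensional ℝ E]
    (B : E →ₗ[ℝ] E →ₗ[ℝ] ℝ) : ∃ T : E →ₗ[ℝ] E, ∀ x y, inner ℝ (T x) y = B x y := by
  refine ⟨(InnerProductSpace.toDual ℝ E).symm.toLinearEquiv.toLinearMap ∘ₗ
    (LinearMap.toContinuousLinearMap (𝕜 := ℝ) (E := E) (F' := ℝ)).toLinearMap ∘ₗ B,
    fun x y => ?_⟩
  simp

/-- The trace of a bilinear form does not depend on the orthonormal basis. -/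
lemma OrthonormalBasis.sum_bilin_self_eq
    {E ι κ : Type*} [NormedAddCommGroup E] [InnerProductSpace ℝ E] [Fintype ι] [Fintype κ]
    (e : OrthonormalBasis ι ℝ E) (f : OrthonormalBasis κ ℝ E) (B : E →ₗ[ℝ] E →ₗ[ℝ] ℝ) :
    ∑ i, B (e i) (e i) = ∑ k, B (f k) (f k) := by
  have : FiniteDimensional ℝ E := e.toBasis.finiteDimensional_of_finite
  obtain ⟨T, hT⟩ := B.exists_inner_apply_eq_bilin
  simp only [← hT, real_inner_comm]
  rw [← T.trace_eq_sum_inner e, T.trace_eq_sum_inner f]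

/-- A symmetric nonnegative matrix with zero diagonal has row sums `r` with
`2 ∑ rᵢ² ≤ (∑ rᵢ)²`. -/
lemma two_mul_sum_sq_rowSum_le_sq_sum {ι : Type*} [Fintype ι] (K : ι → ι → ℝ)
    (hsymm : ∀ i j, K i j = K j i) (hnonneg : ∀ i j, 0 ≤ K i j) (hdiag : ∀ i, K i i = 0) :
    2 * ∑ i, (∑ k, K i k) ^ 2 ≤ (∑ i, ∑ k, K i k) ^ 2 := by
  classical
  have hrow : ∀ i, 2 * ∑ k, K i k ≤ ∑ j, ∑ k, K j k := by
    intro i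
    have hle : ∑ j ∈ Finset.univ.erase i, K i j ≤ ∑ j ∈ Finset.univ.erase i, ∑ k, K j k := by
      refine Finset.sum_le_sum fun j _ => ?_
      rw [hsymm i j]
      exact Finset.single_le_sum (fun k _ => hnonneg j k) (Finset.mem_univ i)
    have hsplit := Finset.add_sum_erase Finset.univ (K i) (Finset.mem_univ i)
    have hsplit_rows :=
      Finset.add_sum_erase Finset.univ (fun j => ∑ k, K j k) (Finset.mem_univ i)
    rw [hdiag] at hsplit
    linarith
  rw [sq (∑ i, ∑ k, K i k), Finset.mul_sum, Finset.mul_sum]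
  refine Finset.sum_le_sum fun i _ => ?_
  rw [sq, ← mul_assoc]
  exact mul_le_mul_of_nonneg_right (hrow i) (Finset.sum_nonneg fun k _ => hnonneg i k)

/-- Let `E` be a real inner product space of finite dimension `n ≥ 2`, and let `R` be a
multilinear 4-form with the curvature symmetries `R(x,y,z,w) = -R(y,x,z,w)` and
`R(x,y,z,w) = R(z,w,x,y)`, having nonnegative sectional curvature
(`R(x,y,x,y) ≥ 0` for all `x`, `y`).  With `Ric(x,z) = ∑ₖ R(x,eₖ,z,eₖ)`,
`Scal = ∑ᵢ Ric(eᵢ,eᵢ)` and `|Ric|² = ∑ᵢⱼ Ric(eᵢ,eⱼ)²` computed in an orthonormal basis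
`e`, one has `Scal² - 2 |Ric|² ≥ 0`. -/
theorem scal_sq_sub_two_ric_sq_nonneg_of_nonneg_sectional
    {E : Type*} [NormedAddCommGroup E] [InnerProductSpace ℝ E] [FiniteDimensional ℝ E]
    {n : ℕ} (hn : 2 ≤ n) (hdim : Module.finrank ℝ E = n)
    (R : E →ₗ[ℝ] E →ₗ[ℝ] E →ₗ[ℝ] E →ₗ[ℝ] ℝ)
    (hanti : ∀ x y z w, R x y z w = - R y x z w)
    (hpair : ∀ x y z w, R x y z w = R z w x y)
    (hsec : ∀ x y : E, 0 ≤ R x y x y)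
    (e : OrthonormalBasis (Fin n) ℝ E)
    (Ric : E → E → ℝ) (hRic : ∀ x z, Ric x z = ∑ k : Fin n, R x (e k) z (e k))
    (Scal : ℝ) (hScal : Scal = ∑ i : Fin n, Ric (e i) (e i))
    (RicNormSq : ℝ)
    (hRicNormSq : RicNormSq = ∑ i : Fin n, ∑ j : Fin n, (Ric (e i) (e j))^2) :
    0 ≤ Scal^2 - 2 * RicNormSq := by
  let B : E →ₗ[ℝ] E →ₗ[ℝ] ℝ := LinearMap.mk₂ ℝ Ric
    (fun x y z => by simp [hRic, Finset.sum_add_distrib])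
    (fun c x z => by simp [hRic, Finset.mul_sum])
    (fun x y z => by simp [hRic, Finset.sum_add_distrib])
    (fun c x z => by simp [hRic, Finset.mul_sum])
  obtain ⟨T, hT⟩ := B.exists_inner_apply_eq_bilin
  replace hT : ∀ x y, inner ℝ (T x) y = Ric x y := hT
  have hTsymm : T.IsSymmetric := by
    intro x y
    rw [hT, real_inner_comm, hT, hRic, hRic]
    exact Finset.sum_congr rfl fun k _ => hpair _ _ _ _
  let f : OrthonormalBasis (Fin n) ℝ E := hTsymm.eigenvectorBasis hdim
  have hRic_f : ∀ i, Ric (f i) (f i) = ∑ k, R (f i) (f k) (f i) (f k) := fun i => by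
    rw [hRic]
    exact e.sum_bilin_self_eq f ((R (f i)).flip (f i))
  have hScal_f : Scal = ∑ i, Ric (f i) (f i) := hScal.trans (e.sum_bilin_self_eq f B)
  have hnorm : RicNormSq = ∑ i, inner ℝ (T (e i)) (T (e i)) := by
    rw [hRicNormSq]
    refine Finset.sum_congr rfl fun i _ => ?_
    rw [← e.sum_inner_mul_inner]
    refine Finset.sum_congr rfl fun j _ => ?_
    rw [real_inner_comm (T (e i)) (e j), hT, sq]
  have hnorm_f : RicNormSq = ∑ i, Ric (f i) (f i) ^ 2 := by
    rw [hnorm]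
    refine (e.sum_bilin_self_eq f ((innerₗ E).compl₁₂ T T)).trans ?_
    refine Finset.sum_congr rfl fun i _ => ?_
    have hTf : T (f i) = hTsymm.eigenvalues hdim i • f i :=
      hTsymm.apply_eigenvectorBasis hdim i
    rw [← hT]
    simp [hTf, inner_smul_left, sq]
  have hmain := two_mul_sum_sq_rowSum_le_sq_sum (fun i k => R (f i) (f k) (f i) (f k))
    (fun i j => by rw [hanti, hpair, hanti, neg_neg])
    (fun i j => hsec _ _)
    (fun i => by linarith [hanti (f i) (f i) (f i) (f i)])
  simp only [← hRic_f] at hmain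
  rw [← hScal_f, ← hnorm_f] at hmain
  exact sub_nonneg.mpr hmain
end

section
/- Let E be a real inner product space of finite dimension n ≥ 4, and let R : E × E × E × E → ℝ be a multilinear map satisfying the curvature symmetries R(x,y,z,w) = −R(y,x,z,w) and R(x,y,z,w) = R(z,w,x,y). Suppose R is 2-nonnegative in the following sense: for every orthonormal basis (f₁, …, f_n) of E, the symmetric real matrix 𝓡 of size C(n,2) × C(n,2), with rows and columns indexed by pairs (j,k) with j < k and entries 𝓡_{(j,k),(l,m)} = R(f_j, f_k, f_l, f_m), has the property that the sum of its two smallest eigenvalues (listed with multiplicity) is nonnegative. Define, for an orthonormal basis (e₁, …, e_n), Ric(x,z) = Σ_k R(x, e_k, z, e_k), Scal = Σ_i Ric(e_i, e_i), and |Ric|² = Σ_{i,j} Ric(e_i, e_j)². Then Scal² − 2|Ric|² ≥ 0. -/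
open scoped BigOperators

/-- If any two eigenvalues of a symmetric matrix have nonnegative sum, so do any two of its
diagonal entries. -/
theorem Matrix.IsHermitian.diag_add_diag_nonneg {ι : Type*} [Fintype ι] [DecidableEq ι]
    {M : Matrix ι ι ℝ} (hM : M.IsHermitian)
    (h : ∀ i j, i ≠ j → 0 ≤ hM.eigenvalues i + hM.eigenvalues j)
    {p q : ι} (hpq : p ≠ q) : 0 ≤ M p p + M q q := by
  have hdiag : ∀ r, M r r = ∑ k, hM.eigenvalues k * (hM.eigenvectorBasis k r) ^ 2 := by
    intro r
    conv_lhs => rw [hM.spectral_theorem]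
    rw [Unitary.conjStarAlgAut_apply, Matrix.mul_apply]
    refine Finset.sum_congr rfl fun k _ => ?_
    simp [Matrix.mul_diagonal, Matrix.star_apply]
    ring
  have hrow : ∀ r, ∑ k, (hM.eigenvectorBasis k r) ^ 2 = 1 := by
    intro r
    have := hM.eigenvectorBasis.sum_sq_norm_inner_left (EuclideanSpace.single r (1 : ℝ))
    simpa [EuclideanSpace.inner_single_left] using this
  have hcol : ∀ k, (hM.eigenvectorBasis k p) ^ 2 + (hM.eigenvectorBasis k q) ^ 2 ≤ 1 := by
    intro k
    have hk : ∑ r, (hM.eigenvectorBasis k r) ^ 2 = 1 := by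
      have := EuclideanSpace.norm_sq_eq (hM.eigenvectorBasis k)
      rw [hM.eigenvectorBasis.norm_eq_one] at this
      simpa using this.symm
    rw [← hk, ← Finset.sum_pair (f := fun r => (hM.eigenvectorBasis k r) ^ 2) hpq]
    exact Finset.sum_le_sum_of_subset_of_nonneg (Finset.subset_univ _)
      fun _ _ _ => sq_nonneg _
  set w : ι → ℝ := fun k => (hM.eigenvectorBasis k p) ^ 2 + (hM.eigenvectorBasis k q) ^ 2 with hw
  have hw0 : ∀ k, 0 ≤ w k := fun k => add_nonneg (sq_nonneg _) (sq_nonneg _)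
  have hsum : ∑ k, w k = 2 := by
    simp only [hw, Finset.sum_add_distrib, hrow]
    norm_num
  have hM2 : M p p + M q q = ∑ k, hM.eigenvalues k * w k := by
    simp only [hw, hdiag p, hdiag q, mul_add, Finset.sum_add_distrib]
  rw [hM2]
  by_cases hneg : ∃ k, hM.eigenvalues k < 0
  · obtain ⟨a, ha⟩ := hneg
    have hother : ∑ k ∈ Finset.univ.erase a, -hM.eigenvalues a * w k
        ≤ ∑ k ∈ Finset.univ.erase a, hM.eigenvalues k * w k := by
      refine Finset.sum_le_sum fun k hk => mul_le_mul_of_nonneg_right ?_ (hw0 k)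
      linarith [h k a (Finset.ne_of_mem_erase hk)]
    rw [← Finset.mul_sum] at hother
    rw [← Finset.add_sum_erase _ _ (Finset.mem_univ a)] at hsum ⊢
    have hrest : ∑ k ∈ Finset.univ.erase a, w k = 2 - w a := by linarith
    rw [hrest] at hother
    nlinarith [hcol a]
  · push Not at hneg
    exact Finset.sum_nonneg fun k _ => mul_nonneg (hneg k) (hw0 k)

/-- A sum of at least two reals, any two of which have nonnegative sum, is nonnegative. -/
theorem Finset.sum_nonneg_of_pairwise_add_nonneg {ι : Type*} [DecidableEq ι] {s : Finset ι}
    (hs : 1 < s.card) {x : ι → ℝ} (h : ∀ i ∈ s, ∀ j ∈ s, i ≠ j → 0 ≤ x i + x j) :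
    0 ≤ ∑ i ∈ s, x i := by
  by_cases hneg : ∃ a ∈ s, x a < 0
  · obtain ⟨a, has, ha⟩ := hneg
    obtain ⟨b, hbs, hba⟩ := Finset.exists_mem_ne hs a
    rw [← Finset.add_sum_erase _ _ has,
      ← Finset.add_sum_erase _ _ (Finset.mem_erase.2 ⟨hba, hbs⟩), ← add_assoc]
    refine add_nonneg (h a has b hbs hba.symm) (Finset.sum_nonneg fun k hk => ?_)
    simp only [Finset.mem_erase] at hk
    linarith [h k hk.2.2 a has hk.2.1]
  · push Not at hneg
    exact Finset.sum_nonneg hneg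

/-- The trace of a bilinear form does not depend on the orthonormal basis. -/
theorem OrthonormalBasis.sum_bilin_eq {E ι : Type*} [Fintype ι] [NormedAddCommGroup E]
    [InnerProductSpace ℝ E] (e f : OrthonormalBasis ι ℝ E) (B : E →ₗ[ℝ] E →ₗ[ℝ] ℝ) :
    ∑ k, B (e k) (e k) = ∑ k, B (f k) (f k) := by
  have hexp : ∀ k, B (e k) (e k) = ∑ l, inner ℝ (f l) (e k) * B (f l) (e k) := by
    intro k
    conv_lhs => enter [1]; rw [← f.sum_repr' (e k)]
    rw [map_sum B, LinearMap.sum_apply]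
    simp
  have hexp' : ∀ l, B (f l) (f l) = ∑ k, inner ℝ (f l) (e k) * B (f l) (e k) := by
    intro l
    conv_lhs => enter [2]; rw [← e.sum_repr' (f l)]
    rw [map_sum (B _)]
    simp [real_inner_comm]
  simp only [hexp, hexp']
  exact Finset.sum_comm

/-- A symmetric bilinear form is diagonal in some orthonormal basis. -/
theorem LinearMap.exists_orthonormalBasis_diagonal {E : Type*} [NormedAddCommGroup E]
    [InnerProductSpace ℝ E] [FiniteDimensional ℝ E] {n : ℕ} (hdim : Module.finrank ℝ E = n)
    (e : OrthonormalBasis (Fin n) ℝ E) (B : E →ₗ[ℝ] E →ₗ[ℝ] ℝ) (hB : ∀ x y, B x y = B y x) :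
    ∃ f : OrthonormalBasis (Fin n) ℝ E, ∀ i j, i ≠ j → B (f i) (f j) = 0 := by
  let T : E →ₗ[ℝ] E := ∑ k, (B.flip (e k)).smulRight (e k)
  have hT : ∀ x y, inner ℝ (T x) y = B x y := by
    intro x y
    conv_rhs => rw [← e.sum_repr' y]
    simp [T, sum_inner, inner_smul_left, mul_comm]
  have hsymm : T.IsSymmetric := fun x y => by
    rw [hT, real_inner_comm, hT, hB]
  refine ⟨hsymm.eigenvectorBasis hdim, fun i j hij => ?_⟩
  rw [← hT, hsymm.apply_eigenvectorBasis, inner_smul_left,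
    (hsymm.eigenvectorBasis hdim).inner_eq_zero hij, mul_zero]

/-- If the entries in each row of a symmetric array with zero diagonal have pairwise nonnegative
sums off the diagonal, then its row sums `r i` satisfy `2 * ∑ i, r i ^ 2 ≤ (∑ i, r i) ^ 2`. -/
theorem two_mul_sum_sq_rowSum_le {n : ℕ} (hn : 4 ≤ n) (K : Fin n → Fin n → ℝ)
    (hsymm : ∀ i j, K i j = K j i) (hdiag : ∀ i, K i i = 0)
    (hK : ∀ a b c, a ≠ b → a ≠ c → b ≠ c → 0 ≤ K a b + K a c) :
    2 * ∑ i, (∑ j, K i j) ^ 2 ≤ (∑ i, ∑ j, K i j) ^ 2 := by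
  have hrow : ∀ i, 0 ≤ ∑ j, K i j := by
    intro i
    rw [← Finset.add_sum_erase _ _ (Finset.mem_univ i), hdiag, zero_add]
    refine Finset.sum_nonneg_of_pairwise_add_nonneg ?_ fun a ha b hb hab =>
      hK i a b (Finset.ne_of_mem_erase ha).symm (Finset.ne_of_mem_erase hb).symm hab
    rw [Finset.card_erase_of_mem (Finset.mem_univ _), Finset.card_univ, Fintype.card_fin]
    omega
  have hrow' : ∀ i j, i ≠ j → 0 ≤ (∑ k, K j k) - K j i := by
    intro i j hij
    have hj : j ∈ Finset.univ.erase i := Finset.mem_erase.2 ⟨hij.symm, Finset.mem_univ j⟩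
    rw [← Finset.add_sum_erase _ _ (Finset.mem_univ i), add_sub_cancel_left,
      ← Finset.add_sum_erase _ _ hj, hdiag, zero_add]
    refine Finset.sum_nonneg_of_pairwise_add_nonneg ?_ fun a ha b hb hab =>
      hK j a b (Finset.ne_of_mem_erase ha).symm (Finset.ne_of_mem_erase hb).symm hab
    rw [Finset.card_erase_of_mem hj, Finset.card_erase_of_mem (Finset.mem_univ _),
      Finset.card_univ, Fintype.card_fin]
    omega
  have hcompl : ∀ i, 0 ≤ (∑ j, ∑ k, K j k) - 2 * ∑ j, K i j := by
    intro i
    have hsub : 0 ≤ ∑ j ∈ Finset.univ.erase i, ((∑ k, K j k) - K j i) :=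
      Finset.sum_nonneg fun j hj => hrow' i j (Finset.ne_of_mem_erase hj).symm
    have hcol : ∑ j, K i j = ∑ j ∈ Finset.univ.erase i, K j i := by
      rw [← Finset.add_sum_erase _ _ (Finset.mem_univ i), hdiag, zero_add]
      exact Finset.sum_congr rfl fun j _ => hsymm i j
    rw [Finset.sum_sub_distrib, ← hcol] at hsub
    rw [← Finset.add_sum_erase _ _ (Finset.mem_univ i)]
    linarith
  have hprod := Finset.sum_nonneg fun i (_ : i ∈ Finset.univ) => mul_nonneg (hrow i) (hcompl i)
  simp only [mul_sub, Finset.sum_sub_distrib, ← Finset.sum_mul] at hprod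
  have hsq : ∑ i, (∑ j, K i j) * (2 * ∑ j, K i j) = 2 * ∑ i, (∑ j, K i j) ^ 2 := by
    rw [Finset.mul_sum]
    exact Finset.sum_congr rfl fun i _ => by ring
  rw [hsq] at hprod
  linarith [sq (∑ i, ∑ j, K i j)]

/-- Let `E` be a real inner product space of finite dimension `n ≥ 4`, and let `R` be a
multilinear 4-form with the curvature symmetries `R(x,y,z,w) = -R(y,x,z,w)` and
`R(x,y,z,w) = R(z,w,x,y)`.  Suppose `R` is 2-nonnegative: for every orthonormal basis
`f` of `E`, the symmetric matrix indexed by pairs `(j,k)` with `j < k`, with entries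
`R(f_j, f_k, f_l, f_m)`, has the sum of (any) two of its eigenvalues-with-multiplicity
nonnegative, i.e. the sum of its two smallest eigenvalues is nonnegative.  Then, with
`Ric(x,z) = ∑ₖ R(x,eₖ,z,eₖ)`, `Scal = ∑ᵢ Ric(eᵢ,eᵢ)` and `|Ric|² = ∑ᵢⱼ Ric(eᵢ,eⱼ)²`
computed in an orthonormal basis `e`, one has `Scal² - 2 |Ric|² ≥ 0`. -/
theorem scal_sq_sub_two_ric_sq_nonneg_of_two_nonneg_curvature_operator
    {E : Type*} [NormedAddCommGroup E] [InnerProductSpace ℝ E] [FiniteDimensional ℝ E]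
    {n : ℕ} (hn : 4 ≤ n) (hdim : Module.finrank ℝ E = n)
    (R : E →ₗ[ℝ] E →ₗ[ℝ] E →ₗ[ℝ] E →ₗ[ℝ] ℝ)
    (hanti : ∀ x y z w, R x y z w = - R y x z w)
    (hpair : ∀ x y z w, R x y z w = R z w x y)
    (h2nn : ∀ (f : OrthonormalBasis (Fin n) ℝ E)
      (hM : (Matrix.of fun p q : {p : Fin n × Fin n // p.1 < p.2} =>
          R (f p.1.1) (f p.1.2) (f q.1.1) (f q.1.2)).IsHermitian)
      (i j : {p : Fin n × Fin n // p.1 < p.2}), i ≠ j →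
        0 ≤ hM.eigenvalues i + hM.eigenvalues j)
    (e : OrthonormalBasis (Fin n) ℝ E)
    (Ric : E → E → ℝ) (hRic : ∀ x z, Ric x z = ∑ k : Fin n, R x (e k) z (e k))
    (Scal : ℝ) (hScal : Scal = ∑ i : Fin n, Ric (e i) (e i))
    (RicNormSq : ℝ)
    (hRicNormSq : RicNormSq = ∑ i : Fin n, ∑ j : Fin n, (Ric (e i) (e j))^2) :
    0 ≤ Scal^2 - 2 * RicNormSq := by
  have hanti' : ∀ x y z w, R x y z w = - R x y w z := fun x y z w => by
    rw [hpair, hanti, hpair]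
  let slot (z w : E) : E →ₗ[ℝ] E →ₗ[ℝ] ℝ :=
    LinearMap.mk₂ ℝ (fun x y => R z x w y) (by simp) (by simp) (by simp) (by simp)
  let B : E →ₗ[ℝ] E →ₗ[ℝ] ℝ :=
    LinearMap.mk₂ ℝ (fun x z => ∑ k, R x (e k) z (e k))
      (by simp [Finset.sum_add_distrib]) (by simp [Finset.mul_sum])
      (by simp [Finset.sum_add_distrib]) (by simp [Finset.mul_sum])
  have hRB : ∀ x z, Ric x z = B x z := hRic
  have hBsymm : ∀ x y, B x y = B y x := fun x y => by
    simp only [← hRB, hRic]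
    exact Finset.sum_congr rfl fun k _ => hpair x (e k) y (e k)
  obtain ⟨f, hf⟩ := LinearMap.exists_orthonormalBasis_diagonal hdim e B hBsymm
  have hBf : ∀ x z, B x z = ∑ k, R x (f k) z (f k) := fun x z => e.sum_bilin_eq f (slot x z)
  let K : Fin n → Fin n → ℝ := fun i j => R (f i) (f j) (f i) (f j)
  have hKsymm : ∀ i j, K i j = K j i := fun i j => by
    simp only [K]
    rw [hanti, hanti', neg_neg]
  have hKdiag : ∀ i, K i i = 0 := fun i => by
    have := hanti (f i) (f i) (f i) (f i)
    simp only [K]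
    linarith
  have hM : (Matrix.of fun p q : {p : Fin n × Fin n // p.1 < p.2} =>
      R (f p.1.1) (f p.1.2) (f q.1.1) (f q.1.2)).IsHermitian := by
    ext p q
    simpa using hpair _ _ _ _
  have hpairs : ∀ p q : {p : Fin n × Fin n // p.1 < p.2}, p ≠ q →
      0 ≤ K p.1.1 p.1.2 + K q.1.1 q.1.2 := fun p q hpq =>
    hM.diag_add_diag_nonneg (h2nn f hM) hpq
  have hK : ∀ a b c, a ≠ b → a ≠ c → b ≠ c → 0 ≤ K a b + K a c := by
    intro a b c hab hac hbc
    rcases lt_or_gt_of_ne hab with h₁ | h₁ <;> rcases lt_or_gt_of_ne hac with h₂ | h₂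
    · exact hpairs ⟨(a, b), h₁⟩ ⟨(a, c), h₂⟩ (by simp [hbc])
    · rw [hKsymm a c]
      exact hpairs ⟨(a, b), h₁⟩ ⟨(c, a), h₂⟩ (by simp [hac])
    · rw [hKsymm a b]
      exact hpairs ⟨(b, a), h₁⟩ ⟨(a, c), h₂⟩ (by simp [hab.symm])
    · rw [hKsymm a b, hKsymm a c]
      exact hpairs ⟨(b, a), h₁⟩ ⟨(c, a), h₂⟩ (by simp [hbc])
  have hS : Scal = ∑ i, ∑ j, K i j := by
    simp only [hScal, hRB]
    rw [e.sum_bilin_eq f B]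
    exact Finset.sum_congr rfl fun i _ => hBf _ _
  have hN : RicNormSq = ∑ i, (∑ j, K i j) ^ 2 := by
    have hswap : ∀ z, ∑ i, B (e i) z ^ 2 = ∑ i, B (f i) z ^ 2 := fun z => by
      simpa [sq] using e.sum_bilin_eq f ((LinearMap.mul ℝ ℝ).compl₁₂ (B.flip z) (B.flip z))
    have hRicf : RicNormSq = ∑ i, ∑ j, B (f i) (f j) ^ 2 := by
      simp only [hRicNormSq, hRB]
      rw [Finset.sum_comm]
      simp only [hswap]
      rw [Finset.sum_comm]
      refine Finset.sum_congr rfl fun i _ => ?_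
      simp only [hBsymm (f i)]
      exact hswap (f i)
    rw [hRicf]
    refine Finset.sum_congr rfl fun i _ => ?_
    rw [Finset.sum_eq_single i (fun j _ hj => by rw [hf i j hj.symm, sq, zero_mul]) (by simp),
      hBf]
  rw [hS, hN]
  exact sub_nonneg.2 (two_mul_sum_sq_rowSum_le hn K hKsymm hKdiag hK)
end
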